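/- The set of m×m positive definite complex matrices equipped with the Riemannian metric δ is a complete metric space: every δ-Cauchy sequence of positive definite matrices converges in δ to a positive definite matrix. -/

import Mathlib

/-!
The topology of `δ` is read off from the Loewner order. Since `δ(A,B)² = ∑ (log λᵢ)²`, where the
`λᵢ` are the eigenvalues of `A^{-1/2} B A^{-1/2}`, congruence by `A^{1/2}` gives

* `δ(A,B) ≤ ε` implies `e^{-ε} A ≤ B ≤ e^ε A` (`loewner_of_rdist_le`), and
* `e^{-ε} A ≤ B ≤ e^ε A` implies `δ(A,B) ≤ √m ε` (`rdist_le_of_loewner`).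

A `δ`-Cauchy sequence is therefore eventually trapped in an order interval `0 ≤ X ≤ e·u_N`, which is
bounded in operator norm, so a subsequence converges entrywise to some `L`. The order inequalities
between the terms `u p` and `u q` are closed conditions, so they survive when `u q` is replaced by
`L`: the lower one shows that `L` is positive definite, and both together that `δ(u p, L)` is small.
No triangle inequality for `δ` is needed.
-/


open Matrix
open scoped ComplexOrder

noncomputable def matFun {m : ℕ} (f : ℝ → ℝ) (A : Matrix (Fin m) (Fin m) ℂ) :
    Matrix (Fin m) (Fin m) ℂ :=
  if hA : A.IsHermitian then
    (hA.eigenvectorUnitary : Matrix (Fin m) (Fin m) ℂ) *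
      Matrix.diagonal (fun i => (f (hA.eigenvalues i) : ℂ)) *
      (star (hA.eigenvectorUnitary : Matrix (Fin m) (Fin m) ℂ))
  else 0

/-- The unique positive definite square root of a positive definite matrix
(realized via the spectral decomposition). -/
noncomputable def msqrt {m : ℕ} (A : Matrix (Fin m) (Fin m) ℂ) : Matrix (Fin m) (Fin m) ℂ :=
  matFun Real.sqrt A

/-- The logarithm of a positive definite matrix: the unique Hermitian `L` with `exp L = A`. -/
noncomputable def mlog {m : ℕ} (A : Matrix (Fin m) (Fin m) ℂ) : Matrix (Fin m) (Fin m) ℂ :=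
  matFun Real.log A

/-- The real power `A ^ t` of a positive definite matrix, via the spectral decomposition. -/
noncomputable def mpow {m : ℕ} (A : Matrix (Fin m) (Fin m) ℂ) (t : ℝ) : Matrix (Fin m) (Fin m) ℂ :=
  matFun (fun x => x ^ t) A

/-- The matrix geometric mean `A # B`. -/
noncomputable def gmean {m : ℕ} (A B : Matrix (Fin m) (Fin m) ℂ) : Matrix (Fin m) (Fin m) ℂ :=
  msqrt A * msqrt ((msqrt A)⁻¹ * B * (msqrt A)⁻¹) * msqrt A

/-- The weighted geometric mean `A #_t B`. -/
noncomputable def wgmean {m : ℕ} (A B : Matrix (Fin m) (Fin m) ℂ) (t : ℝ) :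
    Matrix (Fin m) (Fin m) ℂ :=
  msqrt A * mpow ((msqrt A)⁻¹ * B * (msqrt A)⁻¹) t * msqrt A

/-- The Frobenius (Hilbert–Schmidt) norm `‖X‖₂ = (Tr(X*X))^{1/2}`. -/
noncomputable def fnorm {m : ℕ} (X : Matrix (Fin m) (Fin m) ℂ) : ℝ :=
  Real.sqrt ((Xᴴ * X).trace.re)

/-- The Riemannian metric `δ(A,B) = ‖log(A^{-1/2} B A^{-1/2})‖₂`. -/
noncomputable def rdist {m : ℕ} (A B : Matrix (Fin m) (Fin m) ℂ) : ℝ :=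
  fnorm (mlog ((msqrt A)⁻¹ * B * (msqrt A)⁻¹))

/-- The Loewner order: `A ≤ B` iff `B - A` is positive semidefinite. -/
def Loewner {m : ℕ} (A B : Matrix (Fin m) (Fin m) ℂ) : Prop :=
  (B - A).PosSemidef

/-! ### Functional calculus -/

section matFun

variable {m : ℕ} {A : Matrix (Fin m) (Fin m) ℂ}

lemma matFun_eq (hA : A.IsHermitian) (f : ℝ → ℝ) :
    matFun f A = (hA.eigenvectorUnitary : Matrix (Fin m) (Fin m) ℂ) *
      Matrix.diagonal (fun i => (f (hA.eigenvalues i) : ℂ)) *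
      (star (hA.eigenvectorUnitary : Matrix (Fin m) (Fin m) ℂ)) := by
  rw [matFun, dif_pos hA]

lemma matFun_id (hA : A.IsHermitian) : matFun (fun x => x) A = A := by
  rw [matFun_eq hA]
  conv_rhs => rw [hA.spectral_theorem, Unitary.conjStarAlgAut_apply]
  rfl

lemma matFun_const (hA : A.IsHermitian) (c : ℝ) :
    matFun (fun _ => c) A = c • (1 : Matrix (Fin m) (Fin m) ℂ) := by
  have h : Matrix.diagonal (fun _ : Fin m => (c : ℂ)) = c • 1 := by
    ext i j
    by_cases hij : i = j <;> simp [hij]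
  rw [matFun_eq hA, h]
  simp

lemma matFun_sub (hA : A.IsHermitian) (f g : ℝ → ℝ) :
    matFun (fun x => f x - g x) A = matFun f A - matFun g A := by
  simp only [matFun_eq hA, ← Matrix.sub_mul, ← Matrix.mul_sub, Matrix.diagonal_sub,
    Complex.ofReal_sub]

lemma matFun_mul (hA : A.IsHermitian) (f g : ℝ → ℝ) :
    matFun f A * matFun g A = matFun (fun x => f x * g x) A := by
  have hU : star (hA.eigenvectorUnitary : Matrix (Fin m) (Fin m) ℂ) *
      (hA.eigenvectorUnitary : Matrix (Fin m) (Fin m) ℂ) = 1 :=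
    Unitary.coe_star_mul_self hA.eigenvectorUnitary
  simp only [matFun_eq hA, Complex.ofReal_mul, ← Matrix.diagonal_mul_diagonal]
  simp only [Matrix.mul_assoc]
  rw [← Matrix.mul_assoc (star _) _ (_ * star _), hU, Matrix.one_mul]

lemma matFun_isHermitian (hA : A.IsHermitian) (f : ℝ → ℝ) : (matFun f A).IsHermitian := by
  rw [matFun_eq hA, Matrix.star_eq_conjTranspose]
  refine Matrix.isHermitian_mul_mul_conjTranspose _ ?_
  exact Matrix.isHermitian_diagonal_of_self_adjoint _ (by ext i; simp)

lemma matFun_posSemidef_iff (hA : A.IsHermitian) (f : ℝ → ℝ) :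
    (matFun f A).PosSemidef ↔ ∀ i, 0 ≤ f (hA.eigenvalues i) := by
  rw [matFun_eq hA,
    (Unitary.isUnit_coe (U := hA.eigenvectorUnitary)).posSemidef_star_right_conjugate_iff,
    Matrix.posSemidef_diagonal_iff]
  simp

lemma trace_matFun (hA : A.IsHermitian) (f : ℝ → ℝ) :
    (matFun f A).trace = ∑ i, (f (hA.eigenvalues i) : ℂ) := by
  have hU : star (hA.eigenvectorUnitary : Matrix (Fin m) (Fin m) ℂ) *
      (hA.eigenvectorUnitary : Matrix (Fin m) (Fin m) ℂ) = 1 :=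
    Unitary.coe_star_mul_self hA.eigenvectorUnitary
  rw [matFun_eq hA, Matrix.trace_mul_comm, ← Matrix.mul_assoc, hU, Matrix.one_mul,
    Matrix.trace_diagonal]

lemma fnorm_matFun (hA : A.IsHermitian) (f : ℝ → ℝ) :
    fnorm (matFun f A) = Real.sqrt (∑ i, f (hA.eigenvalues i) ^ 2) := by
  rw [fnorm, (matFun_isHermitian hA f).eq, matFun_mul hA, trace_matFun hA]
  simp [sq]

lemma eigenvalues_le_iff (hA : A.IsHermitian) (c : ℝ) :
    (c • 1 - A).PosSemidef ↔ ∀ i, hA.eigenvalues i ≤ c := by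
  have h : c • 1 - A = matFun (fun x => c - x) A := by
    rw [matFun_sub hA, matFun_const hA, matFun_id hA]
  rw [h, matFun_posSemidef_iff hA]
  simp

lemma le_eigenvalues_iff (hA : A.IsHermitian) (c : ℝ) :
    (A - c • 1).PosSemidef ↔ ∀ i, c ≤ hA.eigenvalues i := by
  have h : A - c • 1 = matFun (fun x => x - c) A := by
    rw [matFun_sub hA, matFun_const hA, matFun_id hA]
  rw [h, matFun_posSemidef_iff hA]
  simp

lemma msqrt_mul_self (hA : A.PosDef) : msqrt A * msqrt A = A := by
  rw [msqrt, matFun_mul hA.isHermitian]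
  conv_rhs => rw [← matFun_id hA.isHermitian]
  rw [matFun_eq hA.isHermitian, matFun_eq hA.isHermitian]
  simp only [Real.mul_self_sqrt (hA.eigenvalues_pos _).le]

lemma isUnit_msqrt (hA : A.PosDef) : IsUnit (msqrt A) := by
  have h : IsUnit (msqrt A * msqrt A) := by rw [msqrt_mul_self hA]; exact hA.isUnit
  rw [Matrix.isUnit_iff_isUnit_det] at h ⊢
  rw [Matrix.det_mul] at h
  exact isUnit_of_mul_isUnit_left h

end matFun

/-! ### The metric and the Loewner order -/

section Metric

variable {m : ℕ} {A B : Matrix (Fin m) (Fin m) ℂ}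

/-- Conjugation by `A^{1/2}`, which carries `1` to `A` and `A^{-1/2} B A^{-1/2}` to `B`, preserves
and reflects positivity of real combinations of these matrices. -/
lemma posSemidef_congr_msqrt (hA : A.PosDef) (a b : ℝ) :
    (a • 1 + b • ((msqrt A)⁻¹ * B * (msqrt A)⁻¹)).PosSemidef ↔ (a • A + b • B).PosSemidef := by
  have hS := isUnit_msqrt hA
  have hdet := (Matrix.isUnit_iff_isUnit_det _).1 hS
  have hstar : star (msqrt A) = msqrt A := matFun_isHermitian hA.isHermitian _
  rw [← hS.posSemidef_star_right_conjugate_iff, hstar]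
  have h : msqrt A * (a • 1 + b • ((msqrt A)⁻¹ * B * (msqrt A)⁻¹)) * msqrt A = a • A + b • B := by
    rw [Matrix.mul_add, Matrix.add_mul, Matrix.mul_smul, Matrix.mul_smul, Matrix.smul_mul,
      Matrix.smul_mul, Matrix.mul_one, msqrt_mul_self hA]
    congr 2
    rw [Matrix.mul_assoc, Matrix.nonsing_inv_mul_cancel_right _ _ hdet,
      Matrix.mul_nonsing_inv_cancel_left _ _ hdet]
  rw [h]

lemma congr_posDef (hA : A.PosDef) (hB : B.PosDef) :
    ((msqrt A)⁻¹ * B * (msqrt A)⁻¹).PosDef := by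
  have hS : IsUnit (msqrt A)⁻¹ := Matrix.isUnit_nonsing_inv_iff.2 (isUnit_msqrt hA)
  have hstar : star (msqrt A)⁻¹ = (msqrt A)⁻¹ := (matFun_isHermitian hA.isHermitian _).inv
  have h := (Matrix.IsUnit.posDef_star_right_conjugate_iff (x := B) hS).2 hB
  rwa [hstar] at h

lemma loewner_of_rdist_le (hA : A.PosDef) (hB : B.PosDef) {ε : ℝ} (h : rdist A B ≤ ε) :
    Loewner (Real.exp (-ε) • A) B ∧ Loewner B (Real.exp ε • A) := by
  have hC := congr_posDef hA hB
  have hlog : ∀ i, |Real.log (hC.isHermitian.eigenvalues i)| ≤ ε := fun i => by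
    rw [rdist, mlog, fnorm_matFun hC.isHermitian] at h
    refine le_trans ?_ h
    rw [← Real.sqrt_sq_eq_abs]
    exact Real.sqrt_le_sqrt (Finset.single_le_sum
      (f := fun i => Real.log (hC.isHermitian.eigenvalues i) ^ 2)
      (fun _ _ => sq_nonneg _) (Finset.mem_univ i))
  constructor
  · have h1 := (le_eigenvalues_iff hC.isHermitian (Real.exp (-ε))).2 fun i =>
      (Real.le_log_iff_exp_le (hC.eigenvalues_pos i)).1 (abs_le.1 (hlog i)).1
    have h2 := (posSemidef_congr_msqrt (B := B) hA (-Real.exp (-ε)) 1).1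
      (by convert h1 using 1; module)
    rw [Loewner]
    convert h2 using 1; module
  · have h1 := (eigenvalues_le_iff hC.isHermitian (Real.exp ε)).2 fun i =>
      (Real.log_le_iff_le_exp (hC.eigenvalues_pos i)).1 (abs_le.1 (hlog i)).2
    have h2 := (posSemidef_congr_msqrt (B := B) hA (Real.exp ε) (-1)).1
      (by convert h1 using 1; module)
    rw [Loewner]
    convert h2 using 1; module

lemma rdist_le_of_loewner (hA : A.PosDef) (hB : B.PosDef) {ε : ℝ} (hε : 0 ≤ ε)
    (h₁ : Loewner (Real.exp (-ε) • A) B) (h₂ : Loewner B (Real.exp ε • A)) :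
    rdist A B ≤ Real.sqrt m * ε := by
  have hC := congr_posDef hA hB
  have hlo := (le_eigenvalues_iff hC.isHermitian (Real.exp (-ε))).1 <| by
    have := (posSemidef_congr_msqrt (B := B) hA (-Real.exp (-ε)) 1).2
      (by rw [Loewner] at h₁; convert h₁ using 1; module)
    convert this using 1; module
  have hhi := (eigenvalues_le_iff hC.isHermitian (Real.exp ε)).1 <| by
    have := (posSemidef_congr_msqrt (B := B) hA (Real.exp ε) (-1)).2
      (by rw [Loewner] at h₂; convert h₂ using 1; module)
    convert this using 1; module
  have hlog : ∀ i, Real.log (hC.isHermitian.eigenvalues i) ^ 2 ≤ ε ^ 2 := fun i =>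
    sq_le_sq' ((Real.le_log_iff_exp_le (hC.eigenvalues_pos i)).2 (hlo i))
      ((Real.log_le_iff_le_exp (hC.eigenvalues_pos i)).2 (hhi i))
  rw [rdist, mlog, fnorm_matFun hC.isHermitian]
  calc Real.sqrt (∑ i, Real.log (hC.isHermitian.eigenvalues i) ^ 2)
      ≤ Real.sqrt (∑ _i : Fin m, ε ^ 2) :=
        Real.sqrt_le_sqrt (Finset.sum_le_sum fun i _ => hlog i)
    _ = Real.sqrt m * ε := by
        rw [Finset.sum_const, Finset.card_univ, Fintype.card_fin, nsmul_eq_mul,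
          Real.sqrt_mul (Nat.cast_nonneg m), Real.sqrt_sq hε]

end Metric

/-! ### Limits in the Loewner order -/

section Limits

open scoped MatrixOrder Matrix.Norms.L2Operator

variable {m : ℕ}

/-- Order intervals are compact: a sequence eventually squeezed between `0` and `B` is bounded in
the operator norm, hence has an entrywise convergent subsequence. -/
lemma exists_subseq_tendsto {u : ℕ → Matrix (Fin m) (Fin m) ℂ} {B : Matrix (Fin m) (Fin m) ℂ}
    {N : ℕ} (h0 : ∀ n, (u n).PosSemidef) (hB : ∀ n, N ≤ n → Loewner (u n) B) :
    ∃ (L : Matrix (Fin m) (Fin m) ℂ) (φ : ℕ → ℕ), Filter.Tendsto φ Filter.atTop Filter.atTop ∧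
      Filter.Tendsto (u ∘ φ) Filter.atTop (nhds L) := by
  have : ProperSpace (Matrix (Fin m) (Fin m) ℂ) := FiniteDimensional.proper ℂ _
  have hbound : ∀ n, u (n + N) ∈ Metric.closedBall (0 : Matrix (Fin m) (Fin m) ℂ) ‖B‖ := fun n => by
    rw [mem_closedBall_zero_iff]
    exact CStarAlgebra.norm_le_norm_of_nonneg_of_le (h0 _).nonneg
      (Matrix.le_iff.2 (hB _ (Nat.le_add_left N n)))
  obtain ⟨L, -, φ, hφ, hL⟩ := tendsto_subseq_of_bounded Metric.isBounded_closedBall hbound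
  exact ⟨L, fun k => φ k + N, Filter.tendsto_atTop_mono (fun k => Nat.le_add_right (φ k) N)
    hφ.tendsto_atTop, hL⟩

lemma loewner_of_tendsto_right {v : ℕ → Matrix (Fin m) (Fin m) ℂ}
    {A L : Matrix (Fin m) (Fin m) ℂ} (hv : Filter.Tendsto v Filter.atTop (nhds L))
    (h : ∀ᶠ n in Filter.atTop, Loewner A (v n)) : Loewner A L :=
  Matrix.le_iff.1 (ge_of_tendsto hv (h.mono fun _ hn => Matrix.le_iff.2 hn))

lemma loewner_of_tendsto_left {v : ℕ → Matrix (Fin m) (Fin m) ℂ}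
    {A L : Matrix (Fin m) (Fin m) ℂ} (hv : Filter.Tendsto v Filter.atTop (nhds L))
    (h : ∀ᶠ n in Filter.atTop, Loewner (v n) A) : Loewner L A :=
  Matrix.le_iff.1 (le_of_tendsto hv (h.mono fun _ hn => Matrix.le_iff.2 hn))

end Limits

/-- `(𝓟, δ)` is a complete metric space: every `δ`-Cauchy sequence of positive definite
matrices converges in `δ` to a positive definite matrix. -/
theorem rdist_complete {m : ℕ} (u : ℕ → Matrix (Fin m) (Fin m) ℂ)
    (hu : ∀ n, (u n).PosDef)
    (hcauchy : ∀ ε : ℝ, 0 < ε → ∃ N : ℕ, ∀ p q : ℕ, N ≤ p → N ≤ q → rdist (u p) (u q) < ε) :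
    ∃ L : Matrix (Fin m) (Fin m) ℂ, L.PosDef ∧
      Filter.Tendsto (fun n => rdist (u n) L) Filter.atTop (nhds 0) := by
  obtain ⟨N₁, hN₁⟩ := hcauchy 1 one_pos
  obtain ⟨L, φ, hφ, hL⟩ := exists_subseq_tendsto (fun n => (hu n).posSemidef) fun n hn =>
    (loewner_of_rdist_le (hu N₁) (hu n) (hN₁ N₁ n le_rfl hn).le).2
  -- The Cauchy inequalities between `u p` and `u (φ k)` pass to the limit `k → ∞`.
  have key : ∀ ε : ℝ, 0 < ε → ∃ N : ℕ, ∀ p, N ≤ p →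
      Loewner (Real.exp (-ε) • u p) L ∧ Loewner L (Real.exp ε • u p) := by
    intro ε hε
    obtain ⟨N, hN⟩ := hcauchy ε hε
    refine ⟨N, fun p hp => ?_⟩
    have hev : ∀ᶠ k in Filter.atTop, Loewner (Real.exp (-ε) • u p) (u (φ k)) ∧
        Loewner (u (φ k)) (Real.exp ε • u p) := by
      filter_upwards [hφ.eventually_ge_atTop N] with k hk
      exact loewner_of_rdist_le (hu p) (hu _) (hN p _ hp hk).le
    exact ⟨loewner_of_tendsto_right hL (hev.mono fun _ h => h.1),
      loewner_of_tendsto_left hL (hev.mono fun _ h => h.2)⟩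
  have hLpos : L.PosDef := by
    obtain ⟨N, hN⟩ := key 1 one_pos
    have h := ((hu N).smul (Real.exp_pos (-1))).add_posSemidef (hN N le_rfl).1
    rwa [add_sub_cancel] at h
  refine ⟨L, hLpos, Metric.tendsto_atTop.2 fun ε hε => ?_⟩
  have hm : 0 < Real.sqrt m + 1 := by positivity
  obtain ⟨N, hN⟩ := key (ε / (Real.sqrt m + 1)) (div_pos hε hm)
  refine ⟨N, fun n hn => ?_⟩
  have hle := rdist_le_of_loewner (hu n) hLpos (div_pos hε hm).le (hN n hn).1 (hN n hn).2
  have hnonneg : 0 ≤ rdist (u n) L := Real.sqrt_nonneg _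
  rw [Real.dist_eq, sub_zero, abs_of_nonneg hnonneg]
  refine hle.trans_lt ?_
  rw [mul_div_assoc', div_lt_iff₀ hm]
  nlinarith
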